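/- arXiv:2502.17723 — 3 statements merged into one kernel-verified Lean document; each statement's English description precedes it below -/
import Mathlib

section
/- For every probability density f0 on [0,1] that is continuous and strictly positive on [0,1], and every ε > 0, there exist a natural number H ≥ 1, weights w_1, …, w_H > 0 with w_1 + ⋯ + w_H = 1, and parameters a_1, …, a_H > 0 and b_1, …, b_H > 0, such that the Kullback–Leibler divergence ∫₀¹ f0(x) · log( f0(x) / Σ_{k=1}^{H} w_k · f_Beta(x; a_k, b_k) ) dx is strictly less than ε. In other words, finite mixtures of Beta densities are dense in Kullback–Leibler divergence in the class of continuous strictly positive densities on [0,1]. -/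
open MeasureTheory Real

/-- The Beta density on `(0,1)` with parameters `a, b`. -/
noncomputable def fBeta (a b x : ℝ) : ℝ :=
  (Real.Gamma (a + b) / (Real.Gamma a * Real.Gamma b)) * x ^ (a - 1) * (1 - x) ^ (b - 1)

lemma fBeta_nat (n k : ℕ) (hk : k ≤ n) (x : ℝ) :
    fBeta ((k:ℝ)+1) (((n-k : ℕ):ℝ)+1) x = (n+1) * ((n.choose k : ℝ) * x^k * (1-x)^(n-k)) := by
  unfold fBeta
  have h1 : ((k:ℝ)+1) + (((n-k : ℕ):ℝ)+1) = ((n+1 : ℕ):ℝ) + 1 := by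
    push_cast [Nat.cast_sub hk]; ring
  rw [h1, Real.Gamma_nat_eq_factorial, Real.Gamma_nat_eq_factorial, Real.Gamma_nat_eq_factorial,
    add_sub_cancel_right, add_sub_cancel_right, Real.rpow_natCast, Real.rpow_natCast,
    Nat.cast_choose ℝ hk, Nat.factorial_succ]
  push_cast
  ring

lemma fBeta_integral (a b : ℝ) (ha : 0 < a) (hb : 0 < b) :
    ∫ x in (0:ℝ)..1, fBeta a b x = 1 := by
  have h := ProbabilityTheory.lintegral_betaPDF_eq_one ha hb
  rw [ProbabilityTheory.lintegral_betaPDF] at h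
  rw [intervalIntegral.integral_of_le zero_le_one, integral_Ioc_eq_integral_Ioo,
    integral_eq_lintegral_of_nonneg_ae]
  · rw [ENNReal.toReal_eq_one_iff, ← h]
    congr 1
    ext x
    simp [fBeta, ProbabilityTheory.beta]
  · refine ae_restrict_of_forall_mem measurableSet_Ioo (fun x hx => ?_)
    have h1 := Real.Gamma_pos_of_pos ha
    have h2 := Real.Gamma_pos_of_pos hb
    have h3 := Real.Gamma_pos_of_pos (add_pos ha hb)
    have h4 := Real.rpow_pos_of_pos hx.1 (a-1)
    have h5 := Real.rpow_pos_of_pos (sub_pos.2 hx.2) (b-1)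
    simp only [fBeta, Pi.zero_apply]
    positivity
  · unfold fBeta
    exact Measurable.aestronglyMeasurable (by fun_prop)

/-- Finite mixtures of Beta densities are dense in Kullback–Leibler divergence among
continuous, strictly positive probability densities on `[0,1]`. -/
theorem beta_mixtures_KL_dense
    (f0 : ℝ → ℝ)
    (hcont : ContinuousOn f0 (Set.Icc 0 1))
    (hpos : ∀ x ∈ Set.Icc (0 : ℝ) 1, 0 < f0 x)
    (hint : ∫ x in (0:ℝ)..1, f0 x = 1)
    (ε : ℝ) (hε : 0 < ε) :
    ∃ (H : ℕ), 1 ≤ H ∧ ∃ (w a b : Fin H → ℝ),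
      (∀ k, 0 < w k) ∧ (∑ k, w k = 1) ∧
      (∀ k, 0 < a k) ∧ (∀ k, 0 < b k) ∧
      (∫ x in (0:ℝ)..1,
          f0 x * Real.log (f0 x / ∑ k, w k * fBeta (a k) (b k) x)) < ε := by
  obtain ⟨x0, hx0, hmin⟩ := isCompact_Icc.exists_isMinOn (Set.nonempty_Icc.2 zero_le_one) hcont
  have hm := hpos x0 hx0
  set m := f0 x0 with hmdef
  set η : ℝ := ε / (4 + ε) with hη
  have hη0 : 0 < η := by positivity
  have hη1 : η < 1 := by rw [hη, div_lt_one (by positivity)]; linarith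
  have hηe : 2 * η / (1 - η) < ε := by
    rw [div_lt_iff₀ (by linarith)]
    have : η * (4 + ε) = ε := by rw [hη]; field_simp
    nlinarith
  let F : C(unitInterval, ℝ) := ⟨fun x => f0 x, hcont.domRestrict⟩
  obtain ⟨n, hn⟩ := ((Metric.tendsto_nhds.1 (bernsteinApproximation_uniform F)) (η * m)
    (by positivity)).exists
  have happ : ∀ x : unitInterval, |bernsteinApproximation n F x - f0 x| < η * m := by
    intro x
    have := (ContinuousMap.dist_lt_iff (by positivity)).1 hn x
    rwa [Real.dist_eq] at this
  let v : Fin (n+1) → ℝ := fun k => f0 ((bernstein.z k : unitInterval) : ℝ) / (n+1)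
  let a : Fin (n+1) → ℝ := fun k => ((k:ℕ):ℝ) + 1
  let b : Fin (n+1) → ℝ := fun k => ((n - (k:ℕ) : ℕ):ℝ) + 1
  have hv : ∀ k, 0 < v k := fun k => div_pos (hpos _ (bernstein.z k).2) (by positivity)
  have ha : ∀ k, 0 < a k := fun k => by positivity
  have hb : ∀ k, 0 < b k := fun k => by positivity
  set S := ∑ k, v k with hS
  have hS0 : 0 < S := Finset.sum_pos (fun k _ => hv k) Finset.univ_nonempty
  let B : ℝ → ℝ := fun x => ∑ k, v k * fBeta (a k) (b k) x
  have hB : ∀ x : unitInterval, B x = bernsteinApproximation n F x := by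
    intro x
    rw [bernsteinApproximation.apply]
    refine Finset.sum_congr rfl fun k _ => ?_
    simp only [a, b, v]
    rw [fBeta_nat n k k.is_le, bernstein_apply, smul_eq_mul]
    change _ = _ * f0 _
    field_simp
  have hcf : ∀ k, Continuous (fBeta (a k) (b k)) := by
    intro k
    have : fBeta (a k) (b k) = fun x =>
        ((n:ℝ)+1) * ((n.choose k : ℝ) * x^(k:ℕ) * (1-x)^(n-(k:ℕ))) := by
      funext x; exact fBeta_nat n k k.is_le x
    rw [this]; fun_prop
  have hBc : Continuous B := by
    refine continuous_finsetSum _ fun k _ => (hcf k).const_mul (v k)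
  have hf0i : IntervalIntegrable f0 volume 0 1 :=
    ContinuousOn.intervalIntegrable (by rwa [Set.uIcc_of_le zero_le_one])
  have hSint : ∫ x in (0:ℝ)..1, B x = S := by
    simp only [B]
    rw [intervalIntegral.integral_finsetSum
      (fun k _ => ((hcf k).const_mul (v k)).intervalIntegrable _ _)]
    refine Finset.sum_congr rfl fun k _ => ?_
    rw [intervalIntegral.integral_const_mul, fBeta_integral _ _ (ha k) (hb k), mul_one]
  have hBb : ∀ x ∈ Set.Icc (0:ℝ) 1, (1 - η) * f0 x ≤ B x ∧ B x ≤ (1 + η) * f0 x := by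
    intro x hx
    have h1 := happ ⟨x, hx⟩
    rw [← hB] at h1
    have h2 : m ≤ f0 x := hmin hx
    have h3 := abs_lt.1 h1
    simp only at h3
    constructor <;> nlinarith [h3.1, h3.2]
  have hS1 : S ≤ 1 + η := by
    rw [← hSint]
    calc _ ≤ ∫ x in (0:ℝ)..1, (1 + η) * f0 x :=
          intervalIntegral.integral_mono_on zero_le_one (hBc.intervalIntegrable _ _)
            (hf0i.const_mul _) (fun x hx => (hBb x hx).2)
      _ = 1 + η := by rw [intervalIntegral.integral_const_mul, hint, mul_one]
  refine ⟨n+1, by omega, fun k => v k / S, a, b, fun k => div_pos (hv k) hS0, ?_, ha, hb, ?_⟩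
  · rw [← Finset.sum_div, div_self hS0.ne']
  have hmix : ∀ x, ∑ k, v k / S * fBeta (a k) (b k) x = B x / S := by
    intro x
    simp only [B]
    rw [Finset.sum_div]
    exact Finset.sum_congr rfl fun k _ => by ring
  simp only [hmix]
  by_cases hI : IntervalIntegrable (fun x => f0 x * Real.log (f0 x / (B x / S))) volume 0 1
  · calc _ ≤ ∫ x in (0:ℝ)..1, (2 * η / (1 - η)) * f0 x := by
          refine intervalIntegral.integral_mono_on zero_le_one hI (hf0i.const_mul _) fun x hx => ?_
          have hf := hpos x hx
          have h1η : 0 < 1 - η := by linarith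
          have hBp : 0 < B x := lt_of_lt_of_le (by positivity) (hBb x hx).1
          rw [mul_comm]
          refine mul_le_mul_of_nonneg_right ?_ hf.le
          refine (Real.log_le_sub_one_of_pos (by positivity)).trans ?_
          have : f0 x / (B x / S) ≤ (1 + η) / (1 - η) := by
            rw [div_div_eq_mul_div, div_le_div_iff₀ hBp h1η]
            calc f0 x * S * (1 - η) = S * ((1 - η) * f0 x) := by ring
              _ ≤ (1 + η) * B x := mul_le_mul hS1 (hBb x hx).1 (by positivity) (by linarith)
          have h2 : (1 + η) / (1 - η) = 2 * η / (1 - η) + 1 := by field_simp; ring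
          linarith
      _ = 2 * η / (1 - η) := by rw [intervalIntegral.integral_const_mul, hint, mul_one]
      _ < ε := hηe
  · rw [intervalIntegral.integral_undef hI]; exact hε
end

section
/- Fix x ∈ (0,1). The function l(a, b) = log Γ(a+b) − log Γ(a) − log Γ(b) + (a−1)·log x + (b−1)·log(1−x), i.e. the log of the Beta density x ↦ f_Beta(x; a, b) viewed as a function of its parameters, is strictly concave on the convex set (0,∞) × (0,∞). -/
open Real

noncomputable def lbK (a b : ℝ) : ℝ :=
  Real.log (Real.Gamma (a + b)) - Real.log (Real.Gamma a) - Real.log (Real.Gamma b)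

noncomputable def lbH (a b y : ℝ) : ℝ :=
  lbK a b + (a - 1) * Real.log y + (b - 1) * Real.log (1 - y)

lemma lbH_exp {a b y : ℝ} (ha : 0 < a) (hb : 0 < b) (hy : y ∈ Set.Ioo (0 : ℝ) 1) :
    Real.exp (lbH a b y) = 1 / ProbabilityTheory.beta a b * y ^ (a - 1) * (1 - y) ^ (b - 1) := by
  have h1 := Real.Gamma_pos_of_pos ha
  have h2 := Real.Gamma_pos_of_pos hb
  have h3 := Real.Gamma_pos_of_pos (add_pos ha hb)
  have hy1 : 0 < 1 - y := by linarith [hy.2]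
  rw [lbH, lbK, Real.exp_add, Real.exp_add, Real.exp_sub, Real.exp_sub, Real.exp_log h1,
    Real.exp_log h2, Real.exp_log h3, Real.rpow_def_of_pos hy.1, Real.rpow_def_of_pos hy1,
    ProbabilityTheory.beta, mul_comm (a - 1), mul_comm (b - 1)]
  field_simp

lemma lbH_integral {a b : ℝ} (ha : 0 < a) (hb : 0 < b) :
    MeasureTheory.IntegrableOn (fun y => Real.exp (lbH a b y)) (Set.Ioo 0 1) ∧
    ∫ y in Set.Ioo (0 : ℝ) 1, Real.exp (lbH a b y) = 1 := by
  have h := ProbabilityTheory.lintegral_betaPDF_eq_one ha hb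
  rw [ProbabilityTheory.lintegral_betaPDF, MeasureTheory.setLIntegral_congr_fun
    (g := fun y => ENNReal.ofReal (Real.exp (lbH a b y))) measurableSet_Ioo
    (fun y hy => by simp only [lbH_exp ha hb hy])] at h
  have hm : Measurable (fun y => Real.exp (lbH a b y)) := by
    unfold lbH; fun_prop
  have h0 : 0 ≤ᵐ[MeasureTheory.volume.restrict (Set.Ioo (0:ℝ) 1)]
      (fun y => Real.exp (lbH a b y)) :=
    Filter.Eventually.of_forall fun y => (Real.exp_pos _).le
  constructor
  · refine ⟨hm.aestronglyMeasurable, ?_⟩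
    rw [MeasureTheory.hasFiniteIntegral_iff_ofReal h0, h]
    exact ENNReal.one_lt_top
  · rw [MeasureTheory.integral_eq_lintegral_of_nonneg_ae h0 hm.aestronglyMeasurable, h]
    simp

lemma lbH_cont (a b : ℝ) : ContinuousOn (fun y => Real.exp (lbH a b y)) (Set.Ioo 0 1) := by
  unfold lbH
  have h1 : ContinuousOn (fun y : ℝ => Real.log y) (Set.Ioo 0 1) :=
    continuousOn_id.log (fun y hy => hy.1.ne')
  have h2 : ContinuousOn (fun y : ℝ => Real.log (1 - y)) (Set.Ioo 0 1) :=
    (continuousOn_const.sub continuousOn_id).log (fun y hy => (sub_pos.2 hy.2).ne')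
  fun_prop

lemma lbH_inj {a b c d : ℝ} (h : ∀ y ∈ Set.Ioo (0 : ℝ) 1, lbH a b y = lbH c d y) :
    a = c ∧ b = d := by
  have h1 := h (1/2) (by norm_num)
  have h2 := h (1/4) (by norm_num)
  have h3 := h (3/4) (by norm_num)
  simp only [lbH] at h1 h2 h3
  norm_num at h1 h2 h3
  have e1 : Real.log (1/2) = - Real.log 2 := by simp
  have e2 : Real.log (1/4) = - (2 * Real.log 2) := by
    rw [show (1/4 : ℝ) = (2^2)⁻¹ by norm_num, Real.log_inv, Real.log_pow]; norm_num
  have e3 : Real.log (3/4) = Real.log 3 - 2 * Real.log 2 := by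
    rw [Real.log_div (by norm_num) (by norm_num), show (4 : ℝ) = 2^2 by norm_num, Real.log_pow]
    norm_num
  have e4 : Real.log 4 = 2 * Real.log 2 := by
    rw [show (4 : ℝ) = 2^2 by norm_num, Real.log_pow]; norm_num
  simp only [e1, e2, e3, e4] at h1 h2 h3
  have p3 : 0 < Real.log 3 := Real.log_pos (by norm_num)
  have p4 : Real.log 3 < 2 * Real.log 2 := by
    rw [← e4]; exact Real.log_lt_log (by norm_num) (by norm_num)
  have q1 : ((a - c) - (b - d)) * Real.log 3 = 0 := by linarith
  have q2 : (a - c) - (b - d) = 0 := by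
    rcases mul_eq_zero.1 q1 with q | q
    · exact q
    · exact absurd q p3.ne'
  have q3 : (a - c) = (b - d) := by linarith
  have q4 : ((a - c) + (b - d)) * (2 * Real.log 2 - Real.log 3) = 0 := by
    linarith
  rcases mul_eq_zero.1 q4 with q | q
  · constructor <;> linarith
  · linarith

/-- For fixed `x ∈ (0,1)`, the log of the Beta density
`(a,b) ↦ log Γ(a+b) − log Γ(a) − log Γ(b) + (a−1) log x + (b−1) log (1−x)`
is strictly concave on `(0,∞) × (0,∞)`. -/
theorem logBetaDensity_strictConcaveOn (x : ℝ) (hx : x ∈ Set.Ioo (0 : ℝ) 1) :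
    StrictConcaveOn ℝ (Set.Ioi (0 : ℝ) ×ˢ Set.Ioi (0 : ℝ))
      (fun p : ℝ × ℝ =>
        Real.log (Real.Gamma (p.1 + p.2)) - Real.log (Real.Gamma p.1)
          - Real.log (Real.Gamma p.2)
          + (p.1 - 1) * Real.log x + (p.2 - 1) * Real.log (1 - x)) := by
  refine ⟨(convex_Ioi 0).prod (convex_Ioi 0), ?_⟩
  rintro ⟨a, b⟩ ⟨ha, hb⟩ ⟨c, d⟩ ⟨hc, hd⟩ hne s t hs ht hst
  simp only [Set.mem_Ioi] at ha hb hc hd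
  change s * lbH a b x + t * lbH c d x < lbH (s * a + t * c) (s * b + t * d) x
  have hsum : ∀ y, lbH (s * a + t * c) (s * b + t * d) y =
      s * lbH a b y + t * lbH c d y
        + (lbK (s * a + t * c) (s * b + t * d) - s * lbK a b - t * lbK c d) := by
    intro y
    obtain rfl : t = 1 - s := by linarith
    simp only [lbH]; ring
  have hw1 : 0 < s * a + t * c := by positivity
  have hw2 : 0 < s * b + t * d := by positivity
  generalize s * a + t * c = p at *
  generalize s * b + t * d = q at *
  by_contra! hcon
  rw [hsum x] at hcon
  have hle : ∀ y, lbH p q y ≤ s * lbH a b y + t * lbH c d y := fun y => by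
    rw [hsum y]; linarith
  obtain ⟨i1, j1⟩ := lbH_integral ha hb
  obtain ⟨i2, j2⟩ := lbH_integral hc hd
  obtain ⟨i3, j3⟩ := lbH_integral hw1 hw2
  have hD : ∀ y, Real.exp (lbH p q y) ≤
      s * Real.exp (lbH a b y) + t * Real.exp (lbH c d y) := fun y =>
    (Real.exp_le_exp.2 (hle y)).trans
      (convexOn_exp.2 (Set.mem_univ _) (Set.mem_univ _) hs.le ht.le hst)
  have i12 := (i1.const_mul s).add (i2.const_mul t)
  have hz := (MeasureTheory.integral_eq_iff_of_ae_le i3 i12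
    (Filter.Eventually.of_forall hD)).1 (by
      simp only [Pi.add_apply]
      rw [MeasureTheory.integral_add (i1.const_mul s) (i2.const_mul t),
        MeasureTheory.integral_const_mul, MeasureTheory.integral_const_mul, j1, j2, j3]
      linarith)
  have heq := MeasureTheory.Measure.eqOn_open_of_ae_eq hz isOpen_Ioo (lbH_cont p q)
    ((continuousOn_const.mul (lbH_cont a b)).add (continuousOn_const.mul (lbH_cont c d)))
  apply hne
  have := lbH_inj (a := a) (b := b) (c := c) (d := d) (fun y hy => by
    by_contra hn
    have h1 := strictConvexOn_exp.2 (Set.mem_univ _) (Set.mem_univ _) hn hs ht hst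
    have h2 := heq hy
    have h3 := Real.exp_le_exp.2 (hle y)
    simp only [smul_eq_mul, Pi.add_apply] at h1 h2
    linarith)
  rw [this.1, this.2]
end

section
/- Let ψ₁ denote the trigamma function, i.e. ψ₁(x) is the second derivative of x ↦ log Γ(x) at x, for x ∈ (0,∞). Then for all a > 0 and b > 0, ψ₁(a) · ψ₁(b) > ψ₁(a+b) · (ψ₁(a) + ψ₁(b)). (Equivalently, since ψ₁ > 0 on (0,∞), the reciprocal trigamma is strictly superadditive: 1/ψ₁(a+b) > 1/ψ₁(a) + 1/ψ₁(b). This is the determinant condition guaranteeing that the Hessian in (a,b) of the log Beta density is negative definite.) -/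
open Real

/-- The trigamma function: the second derivative of `log ∘ Γ` on `(0,∞)`. -/
noncomputable def trigamma (x : ℝ) : ℝ :=
  deriv (deriv (fun y : ℝ => Real.log (Real.Gamma y))) x

/-- digamma -/
noncomputable def dig (x : ℝ) : ℝ := deriv (fun y : ℝ => Real.log (Real.Gamma y)) x

lemma lg_diff {x : ℝ} (hx : 0 < x) :
    DifferentiableAt ℝ (fun y : ℝ => Real.log (Real.Gamma y)) x := by
  have h := Real.differentiableAt_Gamma (s := x) (by
    intro m h
    have : (0:ℝ) ≤ m := Nat.cast_nonneg m
    linarith)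
  exact h.log (Real.Gamma_pos_of_pos hx).ne'

lemma dig_add_one {x : ℝ} (hx : 0 < x) : dig (x + 1) = dig x + 1 / x := by
  have h1 : HasDerivAt (fun y : ℝ => Real.log (Real.Gamma (y + 1))) (dig (x + 1)) x := by
    have := (lg_diff (by linarith : 0 < x + 1)).hasDerivAt.comp_add_const x 1
    exact this
  have h2 : HasDerivAt (fun y : ℝ => Real.log (Real.Gamma y) + Real.log y) (dig x + 1 / x) x := by
    rw [one_div]
    exact (lg_diff hx).hasDerivAt.add (Real.hasDerivAt_log hx.ne')
  refine h1.unique (h2.congr_of_eventuallyEq ?_)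
  filter_upwards [lt_mem_nhds hx] with y hy
  rw [Real.Gamma_add_one hy.ne', Real.log_mul hy.ne' (Real.Gamma_pos_of_pos hy).ne', add_comm]

lemma dig_mono {x y : ℝ} (hx : 0 < x) (hxy : x ≤ y) : dig x ≤ dig y :=
  Real.convexOn_log_Gamma.monotoneOn_deriv (fun _ hz => lg_diff hz) hx
    (lt_of_lt_of_le hx hxy) hxy

lemma dig_add_nat {x : ℝ} (hx : 0 < x) (n : ℕ) :
    dig (x + n) = dig x + ∑ k ∈ Finset.range n, 1 / (x + k) := by
  induction n with
  | zero => simp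
  | succ n ih =>
    rw [Finset.sum_range_succ, ← add_assoc, ← ih, Nat.cast_succ, ← add_assoc,
      dig_add_one (by positivity)]

lemma dig_add_nat_le {x : ℝ} (hx : 0 < x) (n : ℕ) : dig (x + n) ≤ dig x + n / x := by
  rw [dig_add_nat hx]
  have : ∑ k ∈ Finset.range n, 1 / (x + k) ≤ ∑ k ∈ Finset.range n, 1 / x := by
    apply Finset.sum_le_sum
    intro i _
    have : (0:ℝ) ≤ i := Nat.cast_nonneg i
    exact one_div_le_one_div_of_le hx (by linarith)
  simp at this
  rw [div_eq_mul_inv]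
  simpa using this

lemma tendsto_const_div (c x : ℝ) :
    Filter.Tendsto (fun n : ℕ => c / (x + n)) Filter.atTop (nhds 0) :=
  Filter.Tendsto.div_atTop tendsto_const_nhds
    (Filter.tendsto_atTop_add_const_left _ _ tendsto_natCast_atTop_atTop)

lemma dig_hasSum {x y : ℝ} (hx : 0 < x) (hxy : x ≤ y) :
    HasSum (fun k : ℕ => 1 / (x + k) - 1 / (y + k)) (dig y - dig x) := by
  rw [hasSum_iff_tendsto_nat_of_nonneg]
  · obtain ⟨K, hK⟩ := exists_nat_ge (y - x)
    have hlim : Filter.Tendsto (fun n : ℕ => dig (y + n) - dig (x + n)) Filter.atTop (nhds 0) := by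
      refine squeeze_zero (g := fun n : ℕ => (K : ℝ) / (x + n)) ?_ ?_ (tendsto_const_div _ _)
      · intro n
        have := dig_mono (x := x + n) (y := y + n) (by positivity) (by linarith)
        linarith
      · intro n
        have hn : (0:ℝ) ≤ n := Nat.cast_nonneg n
        have h1 := dig_mono (x := y + n) (y := x + n + K) (by linarith) (by linarith)
        have h2 := dig_add_nat_le (x := x + n) (by positivity) K
        linarith
    have := (tendsto_const_nhds (x := dig y - dig x)).sub hlim
    rw [sub_zero] at this
    refine this.congr fun n => ?_
    rw [dig_add_nat hx, dig_add_nat (lt_of_lt_of_le hx hxy), Finset.sum_sub_distrib]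
    ring
  · intro i
    have : (0:ℝ) ≤ i := Nat.cast_nonneg i
    have := one_div_le_one_div_of_le (by linarith : 0 < x + i) (by linarith : x + i ≤ y + i)
    linarith

lemma summable_sq {x : ℝ} (hx : 0 < x) : Summable (fun k : ℕ => 1 / (x + k) ^ 2) := by
  have := (Real.summable_one_div_nat_add_rpow x 2).2 (by norm_num)
  refine this.congr fun k => ?_
  have : (0:ℝ) < k + x := by positivity
  rw [abs_of_pos this, add_comm]
  norm_num

lemma trigamma_hasSum {x : ℝ} (hx : 0 < x) :
    HasSum (fun k : ℕ => 1 / (x + k) ^ 2) (trigamma x) := by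
  have hc : 0 < x / 2 := by positivity
  have hcx : x ∈ Set.Ioi (x / 2) := by simp; linarith
  have key := hasDerivAt_tsum_of_isPreconnected (𝕜 := ℝ) (F := ℝ)
    (g := fun (k : ℕ) (z : ℝ) => 1 / (x / 2 + k) - 1 / (z + k))
    (g' := fun (k : ℕ) (z : ℝ) => 1 / (z + k) ^ 2)
    (u := fun k : ℕ => 1 / (x / 2 + k) ^ 2) (t := Set.Ioi (x / 2)) (y₀ := x) (y := x)
    (summable_sq hc) isOpen_Ioi isPreconnected_Ioi ?_ ?_ hcx
    (dig_hasSum hc hcx.le).summable hcx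
  · have h2 : HasDerivAt dig (∑' k : ℕ, 1 / (x + k) ^ 2) x := by
      refine (key.const_add (dig (x / 2))).congr_of_eventuallyEq ?_
      filter_upwards [Ioi_mem_nhds hcx] with z hz
      rw [(dig_hasSum hc (le_of_lt hz)).tsum_eq]
      ring
    have : trigamma x = ∑' k : ℕ, 1 / (x + k) ^ 2 := h2.deriv
    rw [this]
    exact (summable_sq hx).hasSum
  · intro n z hz
    have hz0 : 0 < z + n := by
      have : (0:ℝ) ≤ n := Nat.cast_nonneg n
      have : x / 2 < z := hz
      linarith
    have := (((hasDerivAt_id z).add_const (n : ℝ)).inv hz0.ne').const_sub (1 / (x / 2 + n))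
    simp only [one_div] at this ⊢
    have e : ((z + n) ^ 2)⁻¹ = -(-1 / (id z + (n : ℝ)) ^ 2) := by
      rw [id, neg_div, neg_neg, one_div]
    rw [e]
    exact this
  · intro n z hz
    have hz1 : x / 2 < z := hz
    have : 0 < x / 2 + n := by positivity
    rw [Real.norm_of_nonneg (by positivity)]
    gcongr

lemma tele {x : ℝ} (hx : 0 < x) :
    HasSum (fun k : ℕ => 1 / (x + k) - 1 / (x + 1 + k)) (1 / x) := by
  have := dig_hasSum hx (by linarith : x ≤ x + 1)
  rwa [dig_add_one hx, add_sub_cancel_left] at this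

lemma trigamma_succ {x : ℝ} (hx : 0 < x) : trigamma x = 1 / x ^ 2 + trigamma (x + 1) := by
  have h := (trigamma_hasSum hx)
  rw [← h.tsum_eq, h.summable.tsum_eq_zero_add, ← (trigamma_hasSum (by linarith : 0 < x + 1)).tsum_eq]
  simp [add_assoc, add_comm, add_left_comm]

lemma HasSum.congr_fun' {f g : ℕ → ℝ} {s : ℝ} (h : HasSum f s) (e : ∀ k, g k = f k) :
    HasSum g s := by
  rwa [funext e]

lemma d_hasSum {x : ℝ} (hx : 0 < x) :
    HasSum (fun k : ℕ => 1 / ((x + k) * (x + k + 1) ^ 2)) (1 / x - trigamma (x + 1)) := by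
  refine HasSum.congr_fun' ((tele hx).sub (trigamma_hasSum (by linarith : 0 < x + 1))) fun k => ?_
  have h : 0 < x + k := by positivity
  rw [show x + 1 + k = (x + k) + 1 by ring]
  generalize x + (k:ℝ) = m at h
  field_simp
  ring

lemma d_pos {x : ℝ} (hx : 0 < x) : 0 ≤ 1 / x - trigamma (x + 1) :=
  (d_hasSum hx).nonneg fun k => by positivity

lemma trigamma_ge {x : ℝ} (hx : 0 < x) : 1 / x ≤ trigamma x := by
  refine hasSum_le (fun k => ?_) (tele hx) (trigamma_hasSum hx)
  have h : 0 < x + k := by positivity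
  rw [show x + 1 + k = (x + k) + 1 by ring]
  generalize x + (k:ℝ) = m at h
  rw [div_sub_div _ _ (by positivity) (by positivity), div_le_div_iff₀ (by positivity) (by positivity)]
  nlinarith [sq_nonneg m]

lemma d_lt {x y : ℝ} (hx : 0 < x) (hxy : x < y) :
    1 / y - trigamma (y + 1) < 1 / x - trigamma (x + 1) := by
  refine hasSum_lt (i := 0) (fun k => ?_) ?_ (d_hasSum (hx.trans hxy)) (d_hasSum hx)
  · have : 0 < x + k := by positivity
    have : 0 ≤ y + k := by linarith
    simp only
    gcongr
  · simp only [Nat.cast_zero, add_zero]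
    apply one_div_lt_one_div_of_lt (by positivity)
    gcongr

lemma phi_step {x : ℝ} (hx : 0 < x) :
    x * trigamma x = (1 / x - trigamma (x + 1)) + (x + 1) * trigamma (x + 1) := by
  rw [trigamma_succ hx]
  field_simp
  ring

lemma phi_step_lt {x y : ℝ} (hx : 0 < x) (hxy : x < y) :
    (x + 1) * trigamma (x + 1) - (y + 1) * trigamma (y + 1) < x * trigamma x - y * trigamma y := by
  have := d_lt hx hxy
  rw [phi_step hx, phi_step (hx.trans hxy)]
  linarith

lemma phi_iter {x y : ℝ} (hx : 0 < x) (hxy : x < y) (n : ℕ) :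
    (x + n) * trigamma (x + n) - (y + n) * trigamma (y + n) ≤ x * trigamma x - y * trigamma y := by
  induction n with
  | zero => simp
  | succ n ih =>
    have := phi_step_lt (x := x + n) (y := y + n) (by positivity) (by linarith)
    push_cast
    rw [← add_assoc, ← add_assoc]
    linarith

lemma phi_le {x y : ℝ} (hx : 0 < x) (hxy : x < y) : y * trigamma y ≤ x * trigamma x := by
  have hlim := (tendsto_const_div 1 y).neg
  rw [neg_zero] at hlim
  have : 0 ≤ x * trigamma x - y * trigamma y := by
    refine le_of_tendsto' hlim fun n => le_trans ?_ (phi_iter hx hxy n)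
    have hxn : 0 < x + n := by positivity
    have hyn : 0 < y + n := by linarith
    generalize x + (n:ℝ) = u at *
    generalize y + (n:ℝ) = v at *
    have h1 : 1 ≤ u * trigamma u := by
      have := mul_le_mul_of_nonneg_left (trigamma_ge hxn) hxn.le
      rwa [mul_one_div_cancel hxn.ne'] at this
    have h2 : v * trigamma v ≤ 1 + 1 / v := by
      rw [trigamma_succ hyn]
      have := mul_le_mul_of_nonneg_left (d_pos hyn) hyn.le
      have e : v * (1 / v) = 1 := mul_one_div_cancel hyn.ne'
      have e2 : v * (1 / v ^ 2) = 1 / v := by field_simp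
      nlinarith
    linarith
  linarith

lemma phi_lt {x y : ℝ} (hx : 0 < x) (hxy : x < y) : y * trigamma y < x * trigamma x := by
  have h1 := phi_step_lt hx hxy
  have h2 := phi_le (x := x + 1) (y := y + 1) (by linarith) (by linarith)
  linarith

lemma trigamma_pos {x : ℝ} (hx : 0 < x) : 0 < trigamma x :=
  lt_of_lt_of_le (by positivity) (trigamma_ge hx)

/-- For all `a, b > 0`, `ψ₁(a) ψ₁(b) > ψ₁(a+b) (ψ₁(a) + ψ₁(b))`: the determinant
condition making the Hessian in `(a,b)` of the log Beta density negative definite. -/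
theorem trigamma_det_condition (a b : ℝ) (ha : 0 < a) (hb : 0 < b) :
    trigamma (a + b) * (trigamma a + trigamma b) < trigamma a * trigamma b := by
  have hA := phi_lt ha (by linarith : a < a + b)
  have hB := phi_lt hb (by linarith : b < a + b)
  have pa := trigamma_pos ha
  have pb := trigamma_pos hb
  have h1 := mul_lt_mul_of_pos_right hA pb
  have h2 := mul_lt_mul_of_pos_right hB pa
  have h3 : 0 < a + b := by linarith
  refine lt_of_mul_lt_mul_left ?_ h3.le
  nlinarith
end
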